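/- arXiv:2408.01992 — 2 statements merged into one kernel-verified Lean document; each statement's English description precedes it below -/
import Mathlib

section
/- Let n ≥ 2, let M be a closed connected topological n-manifold, and let f : M → M be a regular homeomorphism. Let O_1, …, O_k be an enumeration of all periodic orbits of f such that whenever l ≠ j and W^u_{O_j} ∩ W^s_{O_l} ≠ ∅ one has l < j, and for 1 ≤ j ≤ k−1 set A_j = ⋃_{l=1}^{j} W^u_{O_l} and R_j = ⋃_{l=j+1}^{k} W^s_{O_l}. Then (1) R_j is a repeller of f (an attractor of f⁻¹), and (2) if every periodic point belonging to one of the orbits O_{j+1}, …, O_k has Morse index at least 2, then A_j is connected. -/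
open Filter Topology

/-- `M` is a topological `n`-manifold without boundary: every point has an open
neighbourhood homeomorphic to `ℝⁿ`. -/
def IsChartedEuclidean (n : ℕ) (M : Type*) [TopologicalSpace M] : Prop :=
  ∀ x : M, ∃ U : Set M, IsOpen U ∧ x ∈ U ∧ Nonempty (U ≃ₜ EuclideanSpace ℝ (Fin n))

/-- An `ε`-chain of the map `f` from `x` to `y`. -/
def IsEpsChain {M : Type*} [PseudoMetricSpace M] (f : M → M) (ε : ℝ) (x y : M) : Prop :=
  ∃ k : ℕ, 0 < k ∧ ∃ (c : Fin (k + 1) → M) (m : Fin k → ℕ),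
    c 0 = x ∧ c (Fin.last k) = y ∧ (∀ i, 1 ≤ m i) ∧
    ∀ i : Fin k, dist (f^[m i] (c i.castSucc)) (c i.succ) < ε

/-- A point is chain recurrent for `f` if for every `ε > 0` there is an `ε`-chain
from the point to itself. -/
def ChainRecurrent {M : Type*} [PseudoMetricSpace M] (f : M → M) (x : M) : Prop :=
  ∀ ε : ℝ, 0 < ε → IsEpsChain f ε x x

/-- The chain recurrent set of `f`. -/
def chainRecurrentSet {M : Type*} [PseudoMetricSpace M] (f : M → M) : Set M :=
  {x | ChainRecurrent f x}

/-- The canonical hyperbolic model map `a_{i,δu,δs} : ℝⁿ → ℝⁿ`,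
`a(x₁,…,xₙ) = (2δu·x₁, 2x₂, …, 2x_i, (δs/2)·x_{i+1}, x_{i+2}/2, …, xₙ/2)`. -/
noncomputable def modelMap (n i : ℕ) (δu δs : ℝ) :
    EuclideanSpace ℝ (Fin n) → EuclideanSpace ℝ (Fin n) :=
  fun x => WithLp.toLp 2 fun j : Fin n =>
    if (j : ℕ) < i then (if (j : ℕ) = 0 then 2 * δu else 2) * x j
    else (if (j : ℕ) = i then δs / 2 else 1 / 2) * x j

/-- A point `p` is a topologically hyperbolic periodic point of the homeomorphism `f`
with Morse index `i`: `p` is periodic of some least period `m` and `f^m` is conjugate,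
in a neighbourhood of `p`, to the model map `a_{i,δu,δs}` on `ℝⁿ`. -/
def TopHyperbolic {M : Type*} [MetricSpace M] (n : ℕ) (f : M ≃ₜ M) (p : M) (i : ℕ) : Prop :=
  ∃ m : ℕ, 0 < m ∧ Function.IsPeriodicPt (⇑f) m p ∧ Function.minimalPeriod (⇑f) p = m ∧
    ∃ δu δs : ℝ, (δu = 1 ∨ δu = -1) ∧ (δs = 1 ∨ δs = -1) ∧
      ∃ (U : Set M) (_ : IsOpen U) (_ : p ∈ U) (h : U ≃ₜ EuclideanSpace ℝ (Fin n)),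
        ∀ x : U, (⇑f)^[m] (x : M) = ((h.symm (modelMap n i δu δs (h x)) : U) : M)

/-- A homeomorphism is regular if its chain recurrent set is finite and consists of
topologically hyperbolic periodic points (of some Morse index `i ∈ {0,…,n}`). -/
def RegularHomeo {M : Type*} [MetricSpace M] (n : ℕ) (f : M ≃ₜ M) : Prop :=
  (chainRecurrentSet (⇑f)).Finite ∧
    ∀ p ∈ chainRecurrentSet (⇑f), ∃ i ≤ n, TopHyperbolic n f p i

/-- The stable manifold `W^s_p = {q : f^{km}(q) → p, k → +∞}`, `m` the least period. -/
def stableSet {M : Type*} [MetricSpace M] (f : M ≃ₜ M) (p : M) : Set M :=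
  {q | Tendsto (fun k : ℕ => (⇑f)^[k * Function.minimalPeriod (⇑f) p] q) atTop (𝓝 p)}

/-- The unstable manifold `W^u_p = {q : f^{-km}(q) → p, k → +∞}`, `m` the least period. -/
def unstableSet {M : Type*} [MetricSpace M] (f : M ≃ₜ M) (p : M) : Set M :=
  {q | Tendsto (fun k : ℕ => (⇑f.symm)^[k * Function.minimalPeriod (⇑f) p] q) atTop (𝓝 p)}

/-- A saddle periodic point: topologically hyperbolic of Morse index `0 < i < n`. -/
def IsSaddlePt {M : Type*} [MetricSpace M] (n : ℕ) (f : M ≃ₜ M) (p : M) : Prop :=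
  ∃ i, 0 < i ∧ i < n ∧ TopHyperbolic n f p i

/-- A subset `S ⊆ M` is a locally flat `k`-dimensional submanifold of the `n`-manifold
`M`: every `x ∈ S` has an open neighbourhood `U` and a homeomorphism `ψ : U ≃ₜ ℝⁿ` with
`ψ(U ∩ S) = ℝᵏ × {0}`. -/
def IsLocallyFlatSubmanifold (n k : ℕ) {M : Type*} [TopologicalSpace M] (S : Set M) : Prop :=
  ∀ x ∈ S, ∃ U : Set M, IsOpen U ∧ x ∈ U ∧
    ∃ ψ : U ≃ₜ EuclideanSpace ℝ (Fin n),
      ψ '' {y : U | (y : M) ∈ S} = {y | ∀ j : Fin n, k ≤ (j : ℕ) → y j = 0}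
/-- The orbit of a point `p` under the homeomorphism `f`. -/
def orbitOf {M : Type*} [MetricSpace M] (f : M ≃ₜ M) (p : M) : Set M :=
  {x | ∃ j : ℕ, (⇑f)^[j] p = x}


/-- One-step `ε`-pseudo-orbit relation, transitively closed. -/
def PChain {M : Type*} [MetricSpace M] (f : M → M) (ε : ℝ) : M → M → Prop :=
  Relation.TransGen (fun x y => dist (f x) y < ε)

/-- `y` is chain-reachable from `x`. -/
def PCh {M : Type*} [MetricSpace M] (f : M → M) (x y : M) : Prop :=
  ∀ ε : ℝ, 0 < ε → PChain f ε x y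

section Chains

variable {M : Type*} [MetricSpace M]

theorem PChain.isEpsChain {f : M → M} {ε : ℝ} {x y : M} (h : PChain f ε x y) :
    IsEpsChain f ε x y := by
  have key : ∃ K : ℕ, 0 < K ∧ ∃ c : ℕ → M, c 0 = x ∧ c K = y ∧
      ∀ i < K, dist (f (c i)) (c (i + 1)) < ε := by
    induction h with
    | single h =>
      rename_i b
      refine ⟨1, one_pos, fun i => if i = 0 then x else b, by simp, by simp, ?_⟩
      intro i hi
      obtain rfl : i = 0 := by omega
      simpa using h
    | @tail b c' _ h ih =>
      obtain ⟨K, hK, c, h0, h1, h2⟩ := ih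
      refine ⟨K + 1, by omega, fun i => if i ≤ K then c i else c', by simpa using h0, by simp, ?_⟩
      intro i hi
      rcases Nat.lt_or_ge i K with hlt | hge
      · have e1 : i ≤ K := by omega
        have e2 : i + 1 ≤ K := by omega
        simpa [e1, e2] using h2 i hlt
      · obtain rfl : i = K := by omega
        simpa [h1] using h
  obtain ⟨K, hK, c, h0, h1, h2⟩ := key
  refine ⟨K, hK, fun i => c i, fun _ => 1, by simpa using h0, by simpa using h1, fun _ => le_rfl, ?_⟩
  intro i
  simpa using h2 i i.2

theorem PChain.mono {f : M → M} {ε δ : ℝ} (h : ε ≤ δ) {x y : M} (hc : PChain f ε x y) :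
    PChain f δ x y :=
  Relation.TransGen.mono (fun _ _ h' => lt_of_lt_of_le h' h) _ _ hc

theorem PChain.iter {f : M → M} {ε : ℝ} (hε : 0 < ε) (x : M) {n : ℕ} (hn : 0 < n) :
    PChain f ε x (f^[n] x) := by
  induction n with
  | zero => omega
  | succ n ih =>
    rcases Nat.eq_zero_or_pos n with rfl | h
    · exact Relation.TransGen.single (by simpa using hε)
    · refine Relation.TransGen.tail (ih h) ?_
      rw [Function.iterate_succ_apply']
      simpa using hε

theorem PChain.end_perturb {f : M → M} {ε δ : ℝ} {x y z : M} (h : PChain f ε x y)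
    (hd : dist y z < δ) : PChain f (ε + δ) x z := by
  have hδ : 0 < δ := lt_of_le_of_lt dist_nonneg hd
  rcases Relation.TransGen.tail'_iff.1 h with ⟨w, hw, hwy⟩
  refine Relation.TransGen.tail' (Relation.ReflTransGen.mono ?_ _ _ hw) ?_
  · intro a b hab
    exact lt_of_lt_of_le hab (by linarith)
  · calc dist (f w) z ≤ dist (f w) y + dist y z := dist_triangle _ _ _
      _ < ε + δ := add_lt_add hwy hd

theorem PCh.trans {f : M → M} {x y z : M} (h : PCh f x y) (h' : PCh f y z) : PCh f x z :=
  fun ε hε => Relation.TransGen.trans (h ε hε) (h' ε hε)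

theorem PCh.isClosed (f : M → M) (x : M) : IsClosed {y | PCh f x y} := by
  rw [← closure_subset_iff_isClosed]
  intro y hy ε hε
  obtain ⟨z, hz, hd⟩ := Metric.mem_closure_iff.1 hy (ε / 2) (by linarith)
  rw [dist_comm] at hd
  have := PChain.end_perturb (hz (ε / 2) (by linarith)) hd
  simpa using this

theorem PCh.of_frequently {f : M → M} (hf : Continuous f) {y : M}
    (h : ∀ V ∈ 𝓝 y, ∃ z ∈ V, ∃ k : ℕ, 3 ≤ k ∧ f^[k] z ∈ V) : PCh f y y := by
  intro ε hε
  have hV : {z | dist (f y) (f z) < ε} ∩ {z | dist z y < ε} ∈ 𝓝 y := by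
    refine Filter.inter_mem ?_ (Metric.ball_mem_nhds y hε)
    have : {z | dist (f z) (f y) < ε} ∈ 𝓝 y :=
      hf.continuousAt.preimage_mem_nhds (Metric.ball_mem_nhds (f y) hε)
    simpa [dist_comm] using this
  obtain ⟨z, hz, k, hk, hkz⟩ := h _ hV
  obtain ⟨k, rfl⟩ : ∃ k', k = k' + 2 := ⟨k - 2, by omega⟩
  have h1 : PChain f ε y (f z) := Relation.TransGen.single hz.1
  have h2 : PChain f ε (f z) (f^[k] (f z)) := PChain.iter hε _ (by omega)
  refine Relation.TransGen.tail (Relation.TransGen.trans h1 h2) ?_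
  have := hkz.2
  rw [Function.iterate_succ_apply', Function.iterate_succ_apply] at this
  exact this

theorem symm_iterate_apply (f : M ≃ₜ M) (n : ℕ) (x : M) : (⇑f.symm)^[n] ((⇑f)^[n] x) = x :=
  (Function.LeftInverse.iterate f.symm_apply_apply n) x

theorem iterate_symm_apply (f : M ≃ₜ M) (n : ℕ) (x : M) : (⇑f)^[n] ((⇑f.symm)^[n] x) = x :=
  (Function.LeftInverse.iterate f.apply_symm_apply n) x

theorem omega_PCh (f : M ≃ₜ M) {x y : M}
    (h : MapClusterPt y atTop (fun n : ℕ => (⇑f)^[n] x)) : PCh f y y := by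
  refine PCh.of_frequently f.continuous fun V hV => ?_
  have hfr := mapClusterPt_iff_frequently.1 h V hV
  obtain ⟨n, -, hn⟩ := frequently_atTop.1 hfr 0
  obtain ⟨n', hn', hn2⟩ := frequently_atTop.1 hfr (n + 3)
  refine ⟨_, hn, n' - n, by omega, ?_⟩
  rw [← Function.iterate_add_apply, Nat.sub_add_cancel (by omega)]
  exact hn2

theorem alpha_PCh (f : M ≃ₜ M) {x y : M}
    (h : MapClusterPt y atTop (fun n : ℕ => (⇑f.symm)^[n] x)) : PCh f y y := by
  refine PCh.of_frequently f.continuous fun V hV => ?_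
  have hfr := mapClusterPt_iff_frequently.1 h V hV
  obtain ⟨n, -, hn⟩ := frequently_atTop.1 hfr 0
  obtain ⟨n', hn', hn2⟩ := frequently_atTop.1 hfr (n + 3)
  refine ⟨_, hn2, n' - n, by omega, ?_⟩
  have : n' = (n' - n) + n := by omega
  rw [this, Function.iterate_add_apply, Nat.add_sub_cancel, iterate_symm_apply]
  exact hn

theorem minimalPeriod_symm (f : M ≃ₜ M) (p : M) :
    Function.minimalPeriod (⇑f.symm) p = Function.minimalPeriod (⇑f) p := by
  rw [Function.minimalPeriod_eq_minimalPeriod_iff]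
  intro n
  constructor
  · intro h
    have := iterate_symm_apply f n p
    rwa [h.eq] at this
  · intro h
    have := symm_iterate_apply f n p
    rwa [h.eq] at this

theorem conv_of_cluster [CompactSpace M] {g : M → M} (hg : Continuous g) {F : Set M}
    (hF : F.Finite) (hper : ∀ p ∈ F, p ∈ Function.periodicPts g) (x : M)
    (hcl : ∀ y, MapClusterPt y atTop (fun n : ℕ => g^[n] x) → y ∈ F) :
    ∃ p ∈ F, Tendsto (fun k : ℕ => g^[k * Function.minimalPeriod g p] x) atTop (𝓝 p) := by
  classical
  set N := ∏ p ∈ hF.toFinset, Function.minimalPeriod g p with hN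
  have hNpos : 0 < N := Finset.prod_pos fun p hp =>
    Function.minimalPeriod_pos_of_mem_periodicPts (hper p (hF.mem_toFinset.1 hp))
  have hmul : ∀ m : ℕ, 0 < m → Tendsto (fun k : ℕ => k * m) atTop atTop := fun m hm =>
    tendsto_id.atTop_mul_const' hm
  obtain ⟨p, -, hp⟩ := isCompact_univ.exists_mapClusterPt_of_frequently
    (l := atTop) (f := fun k : ℕ => g^[k * N] x) (Frequently.of_forall fun _ => Set.mem_univ _)
  have hpF : p ∈ F := hcl p (MapClusterPt.of_comp (u := fun n : ℕ => g^[n] x) (hmul N hNpos) hp)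
  refine ⟨p, hpF, ?_⟩
  set m := Function.minimalPeriod g p with hm
  have hmpos : 0 < m := Function.minimalPeriod_pos_of_mem_periodicPts (hper p hpF)
  have hmN : m ∣ N := Finset.dvd_prod_of_mem _ (hF.mem_toFinset.2 hpF)
  obtain ⟨d, hd⟩ := hmN
  have hdpos : 0 < d := Nat.pos_of_ne_zero (by rintro rfl; simp at hd; omega)
  set u : ℕ → M := fun k => g^[k * m] x with hu
  have hpu : MapClusterPt p atTop u := by
    refine MapClusterPt.of_comp (u := u) (hmul d hdpos) ?_
    have : (u ∘ fun k => k * d) = fun k : ℕ => g^[k * N] x := by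
      funext k
      have e : k * d * m = k * N := by rw [hd]; ring
      simp only [hu, Function.comp, e]
    rw [this]; exact hp
  have huF : ∀ q, MapClusterPt q atTop u → q ∈ F := fun q hq =>
    hcl q (MapClusterPt.of_comp (u := fun n : ℕ => g^[n] x) (hmul m hmpos) hq)
  have husucc : ∀ k, u (k + 1) = g^[m] (u k) := by
    intro k
    simp only [hu]
    rw [← Function.iterate_add_apply]
    congr 2
    ring
  have hGp : g^[m] p = p := Function.iterate_minimalPeriod
  obtain ⟨V0, W0, hV0, hW0, hpV0, hFW0, hdis⟩ :
      SeparatedNhds {p} (F \ {p}) :=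
    SeparatedNhds.of_isCompact_isCompact isCompact_singleton
      (hF.subset Set.sdiff_subset).isCompact (by simp)
  rw [Set.singleton_subset_iff] at hpV0
  have hG : Continuous (g^[m]) := hg.iterate m
  set V := V0 ∩ g^[m] ⁻¹' V0 with hV
  have hVo : IsOpen V := hV0.inter (hV0.preimage hG)
  have hpV : p ∈ V := ⟨hpV0, by simpa [hGp] using hpV0⟩
  have hev : ∀ᶠ k in atTop, u k ∈ V ∪ W0 := by
    by_contra hcon
    obtain ⟨q, hq1, hq2⟩ := (hVo.union hW0).isClosed_compl.isCompact.exists_mapClusterPt_of_frequently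
      (not_eventually.1 hcon)
    have hqF := huF q hq2
    by_cases hqp : q = p
    · exact hq1 (Or.inl (hqp ▸ hpV))
    · exact hq1 (Or.inr (hFW0 ⟨hqF, hqp⟩))
  obtain ⟨k0, hk0⟩ := eventually_atTop.1 hev
  obtain ⟨k1, hk1, hk1V⟩ := frequently_atTop.1 (mapClusterPt_iff_frequently.1 hpu V (hVo.mem_nhds hpV)) k0
  have hstay : ∀ t, u (k1 + t) ∈ V := by
    intro t
    induction t with
    | zero => exact hk1V
    | succ t ih =>
      have h1 : u (k1 + (t + 1)) ∈ V0 := by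
        rw [← add_assoc, husucc]; exact ih.2
      rcases hk0 (k1 + (t + 1)) (by omega) with h | h
      · exact h
      · exact absurd h (Set.disjoint_left.1 hdis h1)
  refine tendsto_nhds_of_unique_mapClusterPt fun q hq => ?_
  by_contra hqp
  have hqW : q ∈ W0 := hFW0 ⟨huF q hq, hqp⟩
  obtain ⟨k2, hk2, hk2W⟩ := frequently_atTop.1 (mapClusterPt_iff_frequently.1 hq W0 (hW0.mem_nhds hqW)) k1
  obtain ⟨t, rfl⟩ := Nat.exists_eq_add_of_le hk2
  exact Set.disjoint_left.1 hdis (hstay t).1 hk2W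

theorem PCh.of_periodic {f : M → M} {p : M} (hp : p ∈ Function.periodicPts f) (t : ℕ) :
    PCh f p (f^[t] p) := by
  intro ε hε
  obtain ⟨m, hm, hpm⟩ := hp
  have : f^[t] p = f^[t + m] p := by
    rw [Function.iterate_add_apply, hpm.eq]
  rw [this]
  exact PChain.iter hε p (by omega)

theorem PCh.of_stable (f : M ≃ₜ M) {p x : M} (hp : p ∈ Function.periodicPts (⇑f))
    (hx : x ∈ stableSet f p) : PCh f x p := by
  intro ε hε
  have hm := Function.minimalPeriod_pos_of_mem_periodicPts hp
  have h1 := (Metric.tendsto_atTop.1 hx) (ε / 2) (by linarith)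
  obtain ⟨N, hN⟩ := h1
  have h2 := hN (N + 1) (by omega)
  have h3 : PChain f (ε / 2) x _ := PChain.iter (by linarith) x
    (n := (N + 1) * Function.minimalPeriod (⇑f) p) (by positivity)
  simpa using PChain.end_perturb h3 h2

theorem PCh.of_unstable (f : M ≃ₜ M) {p x : M} (hp : p ∈ Function.periodicPts (⇑f))
    (hx : x ∈ unstableSet f p) : PCh f p x := by
  intro ε hε
  have hm := Function.minimalPeriod_pos_of_mem_periodicPts hp
  have hx' : Tendsto (fun k : ℕ => f ((⇑f.symm)^[k * Function.minimalPeriod (⇑f) p] x))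
      atTop (𝓝 (f p)) := (f.continuous.tendsto p).comp hx
  obtain ⟨N, hN⟩ := (Metric.tendsto_atTop.1 hx') ε hε
  have h2 := hN (N + 2) (by omega)
  set s := (N + 2) * Function.minimalPeriod (⇑f) p with hs
  have hs2 : 2 ≤ s := by nlinarith
  have h3 : PChain f ε (f ((⇑f.symm)^[s] x)) ((⇑f)^[s - 1] (f ((⇑f.symm)^[s] x))) :=
    PChain.iter hε _ (by omega)
  rw [← Function.iterate_succ_apply (⇑f), Nat.succ_eq_add_one, Nat.sub_add_cancel (by omega : 1 ≤ s),
    iterate_symm_apply] at h3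
  exact Relation.TransGen.head (by rwa [dist_comm]) h3

theorem mem_stable_of_closed (f : M ≃ₜ M) {p x : M} (hx : x ∈ stableSet f p) {C : Set M}
    (hC : IsClosed C) (hCx : ∀ n : ℕ, (⇑f)^[n] x ∈ C) : p ∈ C :=
  hC.mem_of_tendsto hx (Eventually.of_forall fun _ => hCx _)

theorem mem_unstable_of_closed (f : M ≃ₜ M) {p x : M} (hx : x ∈ unstableSet f p) {C : Set M}
    (hC : IsClosed C) (hCx : ∀ n : ℕ, (⇑f.symm)^[n] x ∈ C) : p ∈ C :=
  hC.mem_of_tendsto hx (Eventually.of_forall fun _ => hCx _)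

/-- Last-exit argument along chains. -/
theorem exit_chain {f : M → M} {ε : ℝ} (hε : 0 < ε) {V : Set M} {q : M}
    (hq : ∀ t : ℕ, f^[t] q ∈ V) {p : M} (hp : p ∉ V) (h : PChain f ε p q) :
    ∃ z, z ∉ V ∧ Relation.ReflTransGen (fun x y => dist (f x) y < ε) p z ∧
      ∃ c : ℕ → M, c 0 = z ∧ (∀ t, dist (f (c t)) (c (t + 1)) < ε) ∧ ∀ t, c (t + 1) ∈ V := by
  have key : ∀ x, Relation.ReflTransGen (fun x y => dist (f x) y < ε) x q →
      (x ∈ V ∧ ∃ c : ℕ → M, c 0 = x ∧ (∀ t, dist (f (c t)) (c (t + 1)) < ε) ∧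
        ∀ t, c (t + 1) ∈ V) ∨
      ∃ z, z ∉ V ∧ Relation.ReflTransGen (fun x y => dist (f x) y < ε) x z ∧
      ∃ c : ℕ → M, c 0 = z ∧ (∀ t, dist (f (c t)) (c (t + 1)) < ε) ∧ ∀ t, c (t + 1) ∈ V := by
    intro x hx
    induction hx using Relation.ReflTransGen.head_induction_on with
    | refl =>
      left
      refine ⟨hq 0, fun t => f^[t] q, rfl, fun t => ?_, fun t => hq _⟩
      show dist (f (f^[t] q)) (f^[t + 1] q) < ε
      rw [Function.iterate_succ_apply']
      simpa using hε
    | @head a b hstep _ ih =>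
      rcases ih with ⟨hb, c, c0, c1, c2⟩ | ⟨z, hz, hbz, hc⟩
      · have hc' : ∃ c : ℕ → M, c 0 = a ∧ (∀ t, dist (f (c t)) (c (t + 1)) < ε) ∧
            ∀ t, c (t + 1) ∈ V := by
          refine ⟨fun t => Nat.casesOn t a c, rfl, ?_, ?_⟩
          · intro t
            cases t with
            | zero => simpa [c0] using hstep
            | succ t => exact c1 t
          · intro t
            cases t with
            | zero => simpa [c0] using hb
            | succ t => exact c2 t
        by_cases ha : a ∈ V
        · exact Or.inl ⟨ha, hc'⟩
        · exact Or.inr ⟨a, ha, Relation.ReflTransGen.refl, hc'⟩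
      · exact Or.inr ⟨z, hz, Relation.ReflTransGen.head hstep hbz, hc⟩
  rcases key p h.to_reflTransGen with h | h
  · exact absurd h.1 hp
  · exact h

/-- If `p` chain-reaches a point `q` whose orbit stays in the open set `V`, `p ∉ V`, then there
is a chain-reachable point outside `V` whose forward orbit is in `closure V`. -/
theorem exit_point [CompactSpace M] {f : M → M} (hf : Continuous f) {V : Set M} (hV : IsOpen V)
    {p q : M} (hpp : PCh f p p) (hq : ∀ t : ℕ, f^[t] q ∈ V) (hp : p ∉ V) (h : PCh f p q) :
    ∃ z, z ∉ V ∧ PCh f p z ∧ ∀ t : ℕ, f^[t + 1] z ∈ closure V := by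
  have hpos : ∀ n : ℕ, (0 : ℝ) < 1 / ((n : ℝ) + 1) := fun n => Nat.one_div_pos_of_nat
  choose z hzV hpz c hc0 hc1 hc2 using fun n : ℕ => exit_chain (hpos n) hq hp (h _ (hpos n))
  have hpz' : ∀ n : ℕ, PChain f (1 / ((n : ℝ) + 1)) p (z n) := fun n =>
    Relation.TransGen.trans_left (hpp _ (hpos n)) (hpz n)
  obtain ⟨w, φ, hφ, hw⟩ := CompactSpace.tendsto_subseq z
  have hlim0 : Tendsto (fun n : ℕ => 1 / ((φ n : ℝ) + 1)) atTop (𝓝 0) :=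
    (tendsto_one_div_add_atTop_nhds_zero_nat (𝕜 := ℝ)).comp hφ.tendsto_atTop
  refine ⟨w, ?_, ?_, ?_⟩
  · exact hV.isClosed_compl.mem_of_tendsto hw (Eventually.of_forall fun n => hzV _)
  · intro ε hε
    have e1 : ∀ᶠ n in atTop, 1 / ((φ n : ℝ) + 1) < ε / 2 :=
      hlim0.eventually (gt_mem_nhds (by linarith))
    have e2 : ∀ᶠ n in atTop, dist (z (φ n)) w < ε / 2 :=
      (Metric.tendsto_nhds.1 hw) (ε / 2) (by linarith)
    obtain ⟨n, h1, h2⟩ := (e1.and e2).exists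
    simpa using PChain.end_perturb ((hpz' (φ n)).mono h1.le) h2
  · have hlim : ∀ t : ℕ, Tendsto (fun n => c (φ n) t) atTop (𝓝 (f^[t] w)) := by
      intro t
      induction t with
      | zero => simpa [hc0, Function.comp_def] using hw
      | succ t ih =>
        rw [Function.iterate_succ_apply']
        have h1 : Tendsto (fun n => f (c (φ n) t)) atTop (𝓝 (f (f^[t] w))) :=
          (hf.tendsto _).comp ih
        refine (tendsto_iff_of_dist ?_).1 h1
        exact squeeze_zero (fun _ => dist_nonneg) (fun n => (hc1 (φ n) t).le) hlim0
    intro t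
    exact mem_closure_of_tendsto (hlim (t + 1)) (Eventually.of_forall fun n => hc2 _ _)

theorem orbitOf_eq (f : M ≃ₜ M) {p q : M} (hp : p ∈ Function.periodicPts (⇑f))
    (hq : q ∈ orbitOf f p) : orbitOf f p = orbitOf f q := by
  obtain ⟨m, hm, hpm⟩ := hp
  obtain ⟨t, rfl⟩ := hq
  apply Set.Subset.antisymm
  · rintro _ ⟨s, rfl⟩
    refine ⟨s + (m * t - t), ?_⟩
    rw [← Function.iterate_add_apply]
    have : t ≤ m * t := Nat.le_mul_of_pos_left t hm
    rw [add_assoc, Nat.sub_add_cancel this, Function.iterate_add_apply, (hpm.mul_const t).eq]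
  · rintro _ ⟨s, rfl⟩
    exact ⟨s + t, by rw [Function.iterate_add_apply]⟩

end Chains

section Separation

theorem ball_diff_isConnected {E : Type*} [NormedAddCommGroup E] [NormedSpace ℝ E]
    {S : Submodule ℝ E} (hS : 1 < Module.rank ℝ (E ⧸ S)) {c : E} (hc : c ∈ S) {r : ℝ}
    (hr : 0 < r) : IsConnected (Metric.ball c r \ (S : Set E)) := by
  have h := isConnected_compl_of_one_lt_codim hS
  set G := OpenPartialHomeomorph.univBall (E := E) (P := E) c r with hG
  have hGv : ∀ x, ∃ a : ℝ, a ≠ 0 ∧ G x = a • x + c := by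
    intro x
    refine ⟨r * (√(1 + ‖x‖ ^ 2))⁻¹, by positivity, ?_⟩
    rw [hG, OpenPartialHomeomorph.univBall, dif_pos hr]
    show r • (OpenPartialHomeomorph.univUnitBall x) + c = _
    rw [OpenPartialHomeomorph.univUnitBall_apply, smul_smul]
  have hiff : ∀ x, G x ∈ S ↔ x ∈ S := by
    intro x
    obtain ⟨a, ha, hx⟩ := hGv x
    rw [hx, Submodule.add_mem_iff_left _ hc, Submodule.smul_mem_iff _ ha]
  have himg : Metric.ball c r \ (S : Set E) = G '' (S : Set E)ᶜ := by
    ext y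
    constructor
    · rintro ⟨hy, hyS⟩
      have hyt : y ∈ G.target := by rw [hG, OpenPartialHomeomorph.univBall_target c hr]; exact hy
      refine ⟨G.symm y, ?_, G.right_inv hyt⟩
      intro hmem
      apply hyS
      have := (hiff (G.symm y)).2 hmem
      rwa [G.right_inv hyt] at this
    · rintro ⟨x, hx, rfl⟩
      refine ⟨?_, fun hmem => hx ((hiff x).1 hmem)⟩
      have : G x ∈ G.target := G.map_source (by simp [hG])
      rwa [hG, OpenPartialHomeomorph.univBall_target c hr] at this
  rw [himg]
  exact h.image _ (OpenPartialHomeomorph.continuous_univBall c r).continuousOn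

/-- A closed set which is a countable union of locally flat cells of codimension at least two
does not separate a compact connected space. -/
theorem compl_isConnected_of_codim {M : Type*} [MetricSpace M] [CompactSpace M] [ConnectedSpace M]
    {E : Type*} [NormedAddCommGroup E] [NormedSpace ℝ E] [FiniteDimensional ℝ E]
    {ι : Type*} [Countable ι] (φ : ι → E → M) (hφ : ∀ i, IsOpenEmbedding (φ i))
    (S : ι → Submodule ℝ E) (hS : ∀ i, 1 < Module.rank ℝ (E ⧸ S i))
    {R : Set M} (hR : IsClosed R) (hRS : R = ⋃ i, φ i '' (S i : Set E)) :
    IsConnected Rᶜ := by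
  have : ProperSpace E := FiniteDimensional.proper ℝ E
  -- the compact pieces
  set D : ι × ℕ → Set M := fun α => φ α.1 '' ((S α.1 : Set E) ∩ Metric.closedBall 0 α.2) with hD
  have hDc : ∀ α, IsCompact (D α) := fun α =>
    ((isCompact_closedBall (0 : E) (α.2 : ℝ)).inter_left
      (Submodule.closed_of_finiteDimensional (S α.1))).image (hφ α.1).continuous
  have hRD : R = ⋃ α, D α := by
    rw [hRS]
    ext x
    simp only [Set.mem_iUnion]
    constructor
    · rintro ⟨i, v, hv, rfl⟩
      obtain ⟨N, hN⟩ := exists_nat_ge ‖v‖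
      exact ⟨(i, N), v, ⟨hv, by simpa using hN⟩, rfl⟩
    · rintro ⟨α, v, hv, rfl⟩
      exact ⟨α.1, v, hv.1, rfl⟩
  -- local connectedness of the complement of the pieces
  have hloc : ∀ i, ∀ v ∈ S i, ∀ B : Set M, IsOpen B → φ i v ∈ B → ∃ B' : Set M, IsOpen B' ∧
      φ i v ∈ B' ∧ B' ⊆ B ∧ IsConnected (B' \ φ i '' (S i : Set E)) := by
    intro i v hv B hB hvB
    obtain ⟨r, hr, hball⟩ := Metric.isOpen_iff.1 (hB.preimage (hφ i).continuous) v hvB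
    refine ⟨φ i '' Metric.ball v r, (hφ i).isOpenMap _ Metric.isOpen_ball,
      ⟨v, Metric.mem_ball_self hr, rfl⟩, Set.image_subset_iff.2 hball, ?_⟩
    rw [← Set.image_sdiff (hφ i).injective]
    exact (ball_diff_isConnected (hS i) hv hr).image _ (hφ i).continuous.continuousOn
  -- the complement is dense
  have hdense : Dense Rᶜ := by
    rw [hRD, Set.compl_iUnion]
    refine dense_iInter_of_isOpen (fun α => (hDc α).isClosed.isOpen_compl) fun α => ?_
    rw [← interior_eq_empty_iff_dense_compl, Set.eq_empty_iff_forall_notMem]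
    intro x hx
    obtain ⟨v, hv, rfl⟩ := interior_subset hx
    obtain ⟨B', -, -, hB', hconn⟩ := hloc α.1 v hv.1 _ isOpen_interior hx
    obtain ⟨y, hy, hyS⟩ := hconn.nonempty
    obtain ⟨w, hw, rfl⟩ := interior_subset (hB' hy)
    exact hyS ⟨w, hw.1, rfl⟩
  refine ⟨hdense.nonempty, ?_⟩
  rw [isPreconnected_iff_subset_of_disjoint]
  intro u v hu hv huv hdisj
  set P := Rᶜ ∩ u with hP
  set Q := Rᶜ ∩ v with hQ
  have hPo : IsOpen P := hR.isOpen_compl.inter hu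
  have hQo : IsOpen Q := hR.isOpen_compl.inter hv
  have hPQ : Disjoint P Q := by
    rw [Set.disjoint_left]
    rintro x ⟨h1, h2⟩ ⟨-, h3⟩
    have : x ∈ Rᶜ ∩ (u ∩ v) := ⟨h1, h2, h3⟩
    rw [hdisj] at this
    exact this
  have hunion : Rᶜ = P ∪ Q := by
    rw [hP, hQ, ← Set.inter_union_distrib_left, Set.inter_eq_left.2 huv]
  have hclun : closure P ∪ closure Q = Set.univ := by
    rw [← closure_union, ← hunion, hdense.closure_eq]
  by_contra hcon
  rw [not_or] at hcon
  have hPne : P.Nonempty := by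
    by_contra hne
    rw [Set.not_nonempty_iff_eq_empty] at hne
    refine hcon.2 fun x hx => ?_
    have : x ∈ P ∪ Q := hunion ▸ hx
    rw [hne, Set.empty_union] at this
    exact this.2
  have hQne : Q.Nonempty := by
    by_contra hne
    rw [Set.not_nonempty_iff_eq_empty] at hne
    refine hcon.1 fun x hx => ?_
    have : x ∈ P ∪ Q := hunion ▸ hx
    rw [hne, Set.union_empty] at this
    exact this.2
  set T := closure P ∩ closure Q with hT
  have hTc : IsClosed T := isClosed_closure.inter isClosed_closure
  have hTne : T.Nonempty := by
    have h := isPreconnected_closed_iff.1 (isPreconnected_univ (α := M)) (closure P) (closure Q)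
      isClosed_closure isClosed_closure hclun.symm.subset
      (by simpa using hPne.closure) (by simpa using hQne.closure)
    simpa using h
  have hTR : T ⊆ R := by
    intro x hx
    by_contra hxR
    have hx' : x ∈ P ∪ Q := hunion ▸ hxR
    rcases hx' with h | h
    · exact Set.disjoint_left.1 (hPQ.closure_right hPo) h hx.2
    · exact Set.disjoint_left.1 (hPQ.closure_left hQo) hx.1 h
  -- Baire category in `T`
  have : CompactSpace T := isCompact_iff_compactSpace.1 hTc.isCompact
  have : Nonempty T := hTne.to_subtype
  obtain ⟨α, x, hx⟩ := nonempty_interior_of_iUnion_of_closed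
    (f := fun α => (Subtype.val : T → M) ⁻¹' D α)
    (fun α => (hDc α).isClosed.preimage continuous_subtype_val) (by
      rw [← Set.preimage_iUnion, ← hRD]
      exact Set.eq_univ_of_forall fun t => hTR t.2)
  obtain ⟨B, hB, hBeq⟩ := isOpen_induced_iff.1 (isOpen_interior (s := (Subtype.val : T → M) ⁻¹' D α))
  have hxB : (x : M) ∈ B := by
    have : x ∈ Subtype.val ⁻¹' B := by rw [hBeq]; exact hx
    exact this
  have hTB : ∀ y ∈ T, y ∈ B → y ∈ D α := by
    intro y hyT hyB
    have h1 : (⟨y, hyT⟩ : T) ∈ Subtype.val ⁻¹' B := hyB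
    rw [hBeq] at h1
    have h2 : (⟨y, hyT⟩ : T) ∈ (Subtype.val : T → M) ⁻¹' D α := interior_subset h1
    exact h2
  have hxD : (x : M) ∈ D α := hTB x x.2 hxB
  obtain ⟨w, hw, hwx⟩ := hxD
  obtain ⟨B', hB'o, hwB', hB'B, hconn⟩ := hloc α.1 w hw.1 B hB (by rw [hwx]; exact hxB)
  have hLR : φ α.1 '' (S α.1 : Set E) ⊆ R := by
    rw [hRS]; exact Set.subset_iUnion (fun i => φ i '' (S i : Set E)) α.1
  have hPB : (B' \ φ α.1 '' (S α.1 : Set E) ∩ closure P).Nonempty := by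
    have hxP : φ α.1 w ∈ closure P := by rw [hwx]; exact x.2.1
    obtain ⟨y, hy1, hy2⟩ := mem_closure_iff.1 hxP B' hB'o hwB'
    exact ⟨y, ⟨hy1, fun h => hy2.1 (hLR h)⟩, subset_closure hy2⟩
  have hQB : (B' \ φ α.1 '' (S α.1 : Set E) ∩ closure Q).Nonempty := by
    have hxQ : φ α.1 w ∈ closure Q := by rw [hwx]; exact x.2.2
    obtain ⟨y, hy1, hy2⟩ := mem_closure_iff.1 hxQ B' hB'o hwB'
    exact ⟨y, ⟨hy1, fun h => hy2.1 (hLR h)⟩, subset_closure hy2⟩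
  obtain ⟨y, hy1, hy2⟩ := isPreconnected_closed_iff.1 hconn.isPreconnected (closure P) (closure Q)
    isClosed_closure isClosed_closure (by rw [hclun]; exact Set.subset_univ _) hPB hQB
  obtain ⟨z, hz, hzy⟩ := hTB y hy2 (hB'B hy1.1)
  exact hy1.2 ⟨z, hz.1, hzy⟩

/-- In a topological manifold, a compact subset of a connected open set is contained in a compact
connected subset. -/
theorem exists_compact_connected {n : ℕ} {M : Type*} [MetricSpace M]
    (hM : IsChartedEuclidean n M) {W : Set M} (hWo : IsOpen W) (hW : IsConnected W) {A : Set M}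
    (hA : IsCompact A) (hAW : A ⊆ W) :
    ∃ L : Set M, IsCompact L ∧ IsConnected L ∧ L ⊆ W ∧ A ⊆ L := by
  have hloc : ∀ x ∈ W, ∃ L ∈ 𝓝 x, IsCompact L ∧ IsConnected L ∧ L ⊆ W := by
    intro x hx
    obtain ⟨U, hU, hxU, ⟨h⟩⟩ := hM x
    set ψ : EuclideanSpace ℝ (Fin n) → M := fun v => (h.symm v : M) with hψ
    have hψo : IsOpenEmbedding ψ := hU.isOpenEmbedding_subtypeVal.comp h.symm.isOpenEmbedding
    have hψx : ψ (h ⟨x, hxU⟩) = x := by simp [hψ]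
    obtain ⟨r, hr, hball⟩ := Metric.nhds_basis_closedBall.mem_iff.1
      ((hWo.preimage hψo.continuous).mem_nhds (show h ⟨x, hxU⟩ ∈ ψ ⁻¹' W by
        rw [Set.mem_preimage, hψx]; exact hx))
    refine ⟨ψ '' Metric.closedBall (h ⟨x, hxU⟩) r, ?_, ?_, ?_, Set.image_subset_iff.2 hball⟩
    · have := hψo.isOpenMap.image_mem_nhds (Metric.closedBall_mem_nhds (h ⟨x, hxU⟩) hr)
      rwa [hψx] at this
    · exact (isCompact_closedBall _ _).image hψo.continuous
    · refine IsConnected.image ⟨⟨_, Metric.mem_closedBall_self hr.le⟩, ?_⟩ _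
        hψo.continuous.continuousOn
      exact (convex_closedBall _ _).isPreconnected
  have hjoin : ∀ {x y : M}, x ∈ W → y ∈ W →
      ∃ L : Set M, IsCompact L ∧ IsConnected L ∧ L ⊆ W ∧ x ∈ L ∧ y ∈ L := by
    refine hW.isPreconnected.induction₂ (fun x y =>
      ∃ L : Set M, IsCompact L ∧ IsConnected L ∧ L ⊆ W ∧ x ∈ L ∧ y ∈ L) ?_ ?_ ?_
    · intro x hx
      obtain ⟨L, hL, h1, h2, h3⟩ := hloc x hx
      filter_upwards [mem_nhdsWithin_of_mem_nhds hL] with y hy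
      exact ⟨L, h1, h2, h3, mem_of_mem_nhds hL, hy⟩
    · rintro x y z - - - ⟨L, h1, h2, h3, h4, h5⟩ ⟨L', h1', h2', h3', h4', h5'⟩
      exact ⟨L ∪ L', h1.union h1', IsConnected.union ⟨y, h5, h4'⟩ h2 h2', Set.union_subset h3 h3',
        Or.inl h4, Or.inr h5'⟩
    · rintro x y - - ⟨L, h1, h2, h3, h4, h5⟩
      exact ⟨L, h1, h2, h3, h5, h4⟩
  obtain ⟨x0, hx0⟩ := hW.nonempty
  have : ∃ L : Set M, IsCompact L ∧ IsConnected L ∧ L ⊆ W ∧ x0 ∈ L ∧ A ⊆ L := by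
    refine hA.induction_on (p := fun A => ∃ L : Set M, IsCompact L ∧ IsConnected L ∧ L ⊆ W ∧
      x0 ∈ L ∧ A ⊆ L) ?_ ?_ ?_ ?_
    · exact ⟨{x0}, isCompact_singleton, isConnected_singleton, by simpa using hx0, rfl,
        Set.empty_subset _⟩
    · rintro s t hst ⟨L, h1, h2, h3, h4, h5⟩
      exact ⟨L, h1, h2, h3, h4, hst.trans h5⟩
    · rintro s t ⟨L, h1, h2, h3, h4, h5⟩ ⟨L', h1', h2', h3', h4', h5'⟩
      exact ⟨L ∪ L', h1.union h1', IsConnected.union ⟨x0, h4, h4'⟩ h2 h2', Set.union_subset h3 h3',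
        Or.inl h4, Set.union_subset_union h5 h5'⟩
    · intro x hx
      obtain ⟨L, hL, h1, h2, h3⟩ := hloc x (hAW hx)
      obtain ⟨L', h1', h2', h3', h4', h5'⟩ := hjoin hx0 (hAW hx)
      exact ⟨L, mem_nhdsWithin_of_mem_nhds hL, L' ∪ L, h1'.union h1,
        IsConnected.union ⟨x, h5', mem_of_mem_nhds hL⟩ h2' h2, Set.union_subset h3' h3,
        Or.inl h4', Set.subset_union_right⟩
  obtain ⟨L, h1, h2, h3, -, h5⟩ := this
  exact ⟨L, h1, h2, h3, h5⟩

/-- The stable coordinate subspace of the model map. -/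
def stableSub (n i : ℕ) : Submodule ℝ (EuclideanSpace ℝ (Fin n)) where
  carrier := {x | ∀ j : Fin n, (j : ℕ) < i → x j = 0}
  add_mem' := by
    intro a b ha hb j hj
    simp [ha j hj, hb j hj]
  zero_mem' := by
    intro j _
    simp
  smul_mem' := by
    intro c x hx j hj
    simp [hx j hj]

theorem stableSub_codim {n i : ℕ} (hi : 2 ≤ i) (hin : i ≤ n) :
    1 < Module.rank ℝ (EuclideanSpace ℝ (Fin n) ⧸ stableSub n i) := by
  let π : EuclideanSpace ℝ (Fin n) →ₗ[ℝ] (Fin i → ℝ) :=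
    { toFun := fun x t => x (Fin.castLE hin t)
      map_add' := by intro x y; ext t; simp
      map_smul' := by intro c x; ext t; simp }
  have hker : stableSub n i = LinearMap.ker π := by
    ext x
    rw [LinearMap.mem_ker]
    constructor
    · intro hx
      ext t
      exact hx (Fin.castLE hin t) t.2
    · intro hx j hj
      exact congrFun hx ⟨j, hj⟩
  have hsurj : Function.Surjective π := by
    intro y
    refine ⟨WithLp.toLp 2 fun j => if h : (j : ℕ) < i then y ⟨j, h⟩ else 0, ?_⟩
    ext t
    simp [π]
  rw [hker, (LinearMap.quotKerEquivOfSurjective π hsurj).rank_eq, rank_fin_fun]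
  exact_mod_cast hi

theorem modelMap_iter_abs {n i : ℕ} {δu δs : ℝ} (hu : δu = 1 ∨ δu = -1) (hs : δs = 1 ∨ δs = -1)
    (x : EuclideanSpace ℝ (Fin n)) (j : Fin n) (k : ℕ) :
    |((modelMap n i δu δs)^[k] x) j| = (if (j : ℕ) < i then 2 else 1 / 2) ^ k * |x j| := by
  induction k with
  | zero => simp
  | succ k ih =>
    rw [Function.iterate_succ_apply']
    have hu' : |δu| = 1 := by rcases hu with rfl | rfl <;> simp
    have hs' : |δs| = 1 := by rcases hs with rfl | rfl <;> simp
    have : ∀ y : EuclideanSpace ℝ (Fin n), |(modelMap n i δu δs y) j| =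
        (if (j : ℕ) < i then 2 else 1 / 2) * |y j| := by
      intro y
      simp only [modelMap]
      split_ifs <;> simp [abs_mul, abs_div, hu', hs']
    rw [this, ih, pow_succ]
    ring

theorem stable_decomp {n i : ℕ} {M : Type*} [MetricSpace M] (f : M ≃ₜ M) {p : M}
    (hp : TopHyperbolic n f p i) :
    ∃ φ : ℕ → EuclideanSpace ℝ (Fin n) → M, (∀ s, IsOpenEmbedding (φ s)) ∧
      stableSet f p = ⋃ s, φ s '' (stableSub n i : Set (EuclideanSpace ℝ (Fin n))) := by
  obtain ⟨m, hm, hper, hmin, δu, δs, hu, hs, U, hU, hpU, h, hconj⟩ := hp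
  set a := modelMap n i δu δs with ha
  have hconj' : ∀ (k : ℕ) (x : U), (⇑f)^[k * m] (x : M) = (h.symm (a^[k] (h x)) : U) := by
    intro k
    induction k with
    | zero => intro x; simp
    | succ k ih =>
      intro x
      rw [Nat.succ_mul, Function.iterate_add_apply, hconj, ih]
      simp
  have hgk : ∀ s, IsOpenEmbedding ((⇑f.symm)^[s]) := by
    intro s
    induction s with
    | zero => exact IsOpenEmbedding.id
    | succ s ih => rw [Function.iterate_succ]; exact ih.comp f.symm.isOpenEmbedding
  have hp0 : ∀ j : Fin n, (h ⟨p, hpU⟩) j = 0 := by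
    intro j
    have h1 := hconj ⟨p, hpU⟩
    rw [hper.eq] at h1
    have h2 : h ⟨p, hpU⟩ = a (h ⟨p, hpU⟩) := by
      rw [← h.symm.injective.eq_iff, ← Subtype.val_inj, ← h1, h.symm_apply_apply]
    have h3 := modelMap_iter_abs (i := i) hu hs (h ⟨p, hpU⟩) j 1
    rw [Function.iterate_one, ← ha, ← h2, pow_one] at h3
    by_contra hne
    have hpos : 0 < |(h ⟨p, hpU⟩) j| := abs_pos.2 hne
    split_ifs at h3 <;> linarith
  have hp0' : h ⟨p, hpU⟩ = 0 := by ext j; simpa using hp0 j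
  refine ⟨fun s v => (⇑f.symm)^[s * m] (h.symm v : U), ?_, ?_⟩
  · intro s
    exact (hgk (s * m)).comp (hU.isOpenEmbedding_subtypeVal.comp h.symm.isOpenEmbedding)
  · ext x
    simp only [stableSet, Set.mem_ofPred_eq, hmin, Set.mem_iUnion, Set.mem_image]
    constructor
    · intro hx
      obtain ⟨s, hs'⟩ := eventually_atTop.1 (hx.eventually (hU.mem_nhds hpU))
      have hxs : (⇑f)^[s * m] x ∈ U := hs' s le_rfl
      refine ⟨s, h ⟨_, hxs⟩, ?_, ?_⟩
      · intro j hj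
        have hk : ∀ k, (⇑f)^[(k + s) * m] x = (h.symm (a^[k] (h ⟨_, hxs⟩)) : U) := by
          intro k
          rw [← hconj' k ⟨_, hxs⟩, ← Function.iterate_add_apply, add_mul]
        have h1 : Tendsto (fun k => ((h.symm (a^[k] (h ⟨_, hxs⟩)) : U) : M)) atTop (𝓝 p) := by
          have := hx.comp (tendsto_add_atTop_nat s)
          refine this.congr fun k => hk k
        have h2 : Tendsto (fun k => (h.symm (a^[k] (h ⟨_, hxs⟩)) : U)) atTop (𝓝 ⟨p, hpU⟩) :=
          tendsto_subtype_rng.2 h1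
        have h3 := (h.continuous.tendsto _).comp h2
        rw [hp0'] at h3
        have hcj : Continuous fun v : EuclideanSpace ℝ (Fin n) => |v j| := by fun_prop
        have h4 := (hcj.tendsto _).comp h3
        have h5 : Tendsto (fun k : ℕ => (2 : ℝ) ^ k * |(h ⟨_, hxs⟩) j|) atTop (𝓝 0) := by
          have e : |(0 : EuclideanSpace ℝ (Fin n)) j| = 0 := by simp
          rw [e] at h4
          refine h4.congr fun k => ?_
          have := modelMap_iter_abs (i := i) hu hs (h ⟨_, hxs⟩) j k
          rw [if_pos hj] at this
          simpa using this
        have h6 : |(h ⟨_, hxs⟩) j| ≤ 0 := by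
          refine ge_of_tendsto' h5 fun k => ?_
          exact le_mul_of_one_le_left (abs_nonneg _) (one_le_pow₀ one_le_two)
        exact abs_eq_zero.1 (le_antisymm h6 (abs_nonneg _))
      · rw [h.symm_apply_apply, symm_iterate_apply]
    · rintro ⟨s, v, hv, rfl⟩
      rw [← tendsto_add_atTop_iff_nat s]
      have e : ∀ k, (⇑f)^[(k + s) * m] ((⇑f.symm)^[s * m] (h.symm v : U)) =
          (h.symm (a^[k] v) : U) := by
        intro k
        rw [add_mul, Function.iterate_add_apply, iterate_symm_apply, hconj', h.apply_symm_apply]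
      simp only [e]
      have hlim : Tendsto (fun k => a^[k] v) atTop (𝓝 0) := by
        rw [(PiLp.homeomorph 2 (fun _ : Fin n => ℝ)).isInducing.tendsto_nhds_iff, tendsto_pi_nhds]
        intro j
        show Tendsto (fun k => (a^[k] v) j) atTop (𝓝 (0 : ℝ))
        rw [tendsto_zero_iff_abs_tendsto_zero]
        have : Tendsto (fun k : ℕ => (1 / 2 : ℝ) ^ k * |v j|) atTop (𝓝 0) := by
          simpa using (tendsto_pow_atTop_nhds_zero_of_lt_one (by norm_num : (0 : ℝ) ≤ 1 / 2)
            (by norm_num)).mul_const |v j|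
        refine this.congr fun k => ?_
        have h1 := modelMap_iter_abs (i := i) hu hs v j k
        by_cases hj : (j : ℕ) < i
        · have : v j = 0 := hv j hj
          rw [this] at h1 ⊢
          refine Eq.trans ?_ h1.symm
          simp
        · rw [if_neg hj] at h1
          exact h1.symm
      have := ((continuous_subtype_val.comp h.symm.continuous).tendsto 0).comp hlim
      have e2 : ((h.symm 0 : U) : M) = p := by rw [← hp0', h.symm_apply_apply]
      rw [Function.comp_apply, e2] at this
      exact this

end Separation

section Main

variable {M : Type*} [MetricSpace M] [CompactSpace M]

theorem exists_stable (f : M ≃ₜ M) {F : Set M} (hF : F.Finite)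
    (hper : ∀ p ∈ F, p ∈ Function.periodicPts (⇑f)) (hrec : ∀ y, PCh f y y → y ∈ F) (x : M) :
    ∃ p ∈ F, x ∈ stableSet f p :=
  conv_of_cluster f.continuous hF hper x fun _ hy => hrec _ (omega_PCh f hy)

theorem exists_unstable (f : M ≃ₜ M) {F : Set M} (hF : F.Finite)
    (hper : ∀ p ∈ F, p ∈ Function.periodicPts (⇑f)) (hrec : ∀ y, PCh f y y → y ∈ F) (x : M) :
    ∃ p ∈ F, x ∈ unstableSet f p := by
  have hper' : ∀ p ∈ F, p ∈ Function.periodicPts (⇑f.symm) := by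
    intro p hp
    have h := Function.minimalPeriod_pos_of_mem_periodicPts (hper p hp)
    rw [← minimalPeriod_symm] at h
    exact Function.minimalPeriod_pos_iff_mem_periodicPts.1 h
  obtain ⟨p, hp, h⟩ := conv_of_cluster f.symm.continuous hF hper' x
    fun _ hy => hrec _ (alpha_PCh f hy)
  refine ⟨p, hp, ?_⟩
  rw [minimalPeriod_symm] at h
  exact h

theorem PCh.backward (f : M ≃ₜ M) {x y : M} (hxx : PCh f x x) (h : PCh f x y) :
    PCh f x (f.symm y) := by
  intro ε hε
  obtain ⟨δ, hδ, hcont⟩ := Metric.continuousAt_iff.1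
    (f.symm.continuous.continuousAt (x := y)) (ε / 2) (by linarith)
  obtain ⟨z, hz, hzy⟩ := Relation.TransGen.tail'_iff.1 (h (min δ (ε / 2)) (by positivity))
  have h1 : PChain f (ε / 2) x z := by
    refine PChain.mono (min_le_right δ (ε / 2)) ?_
    exact Relation.TransGen.trans_left (hxx _ (by positivity)) hz
  have h2 : dist z (f.symm y) < ε / 2 := by
    have := hcont (lt_of_lt_of_le hzy (min_le_left _ _))
    rwa [f.symm_apply_apply] at this
  simpa using h1.end_perturb h2

/-- Existence of an attracting neighbourhood. -/
theorem exists_trapping (f : M ≃ₜ M) {F : Set M} (hF : F.Finite)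
    (hper : ∀ p ∈ F, p ∈ Function.periodicPts (⇑f)) (hrec : ∀ y, PCh f y y → y ∈ F)
    {P : Set M} (hPF : P ⊆ F) (hsep : ∀ p ∈ P, ∀ q ∈ F, PCh f p q → q ∈ P) :
    ∃ Q : Set M, IsCompact Q ∧ P ⊆ interior Q ∧ f '' Q ⊆ interior Q ∧ (∀ q ∈ F, q ∈ Q → q ∈ P) ∧
      (⋂ m : ℕ, (⇑f)^[m] '' Q) = ⋃ p ∈ P, unstableSet f p := by
  have hPfin : P.Finite := hF.subset hPF
  have hpp : ∀ p ∈ P, PCh f p p := fun p hp => PCh.of_periodic (hper p (hPF hp)) 0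
  obtain ⟨ε, hε, hεP⟩ : ∃ ε : ℝ, 0 < ε ∧ ∀ p ∈ P, ∀ q ∈ F \ P, ¬ PChain f ε p q := by
    have : ∀ᶠ ε : ℝ in 𝓝[>] 0, ∀ p ∈ P, ∀ q ∈ F \ P, ¬ PChain f ε p q := by
      rw [hPfin.eventually_all]
      intro p hp
      rw [(hF.subset Set.sdiff_subset).eventually_all]
      intro q hq
      have hn : ¬ PCh f p q := fun h => hq.2 (hsep p hp q hq.1 h)
      simp only [PCh, not_forall] at hn
      obtain ⟨δ, hδ, hn⟩ := hn
      filter_upwards [Ioo_mem_nhdsGT hδ] with ε hε hc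
      exact hn (hc.mono hε.2.le)
    obtain ⟨ε, h1, h2⟩ := (this.and self_mem_nhdsWithin).exists
    exact ⟨ε, h2, h1⟩
  set V : Set M := {y | ∃ p ∈ P, PChain f (ε / 2) p y} with hV
  have hε2 : 0 < ε / 2 := by linarith
  have hVo : IsOpen V := by
    rw [isOpen_iff_mem_nhds]
    rintro y ⟨p, hp, hy⟩
    obtain ⟨z, hz, hzy⟩ := Relation.TransGen.tail'_iff.1 hy
    have : {w | dist (f z) w < ε / 2} ∈ 𝓝 y :=
      (isOpen_lt (by fun_prop) continuous_const).mem_nhds hzy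
    filter_upwards [this] with w hw
    exact ⟨p, hp, Relation.TransGen.tail' hz hw⟩
  have hVint : V ⊆ interior (closure V) := interior_maximal subset_closure hVo
  have hfV : ∀ y ∈ closure V, f y ∈ V := by
    intro y hy
    have hn : {w | dist (f w) (f y) < ε / 2} ∈ 𝓝 y :=
      f.continuous.continuousAt.preimage_mem_nhds (Metric.ball_mem_nhds (f y) hε2)
    obtain ⟨w, hw1, p, hp, hw2⟩ := mem_closure_iff_nhds.1 hy _ hn
    exact ⟨p, hp, Relation.TransGen.tail hw2 hw1⟩
  have hQF : ∀ q ∈ F, q ∈ closure V → q ∈ P := by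
    intro q hq hqV
    by_contra hqP
    obtain ⟨z, ⟨p, hp, hz⟩, hd⟩ := Metric.mem_closure_iff.1 hqV (ε / 2) hε2
    rw [dist_comm] at hd
    have h := hz.end_perturb hd
    rw [add_halves] at h
    exact hεP p hp q ⟨hq, hqP⟩ h
  have hPV : P ⊆ V := fun p hp => ⟨p, hp, hpp p hp _ hε2⟩
  refine ⟨closure V, isClosed_closure.isCompact, hPV.trans hVint, ?_, hQF, ?_⟩
  · rintro _ ⟨y, hy, rfl⟩
    exact hVint (hfV y hy)
  · ext x
    simp only [Set.mem_iInter, Set.mem_iUnion, exists_prop]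
    constructor
    · intro hx
      obtain ⟨p, hp, hxp⟩ := exists_unstable f hF hper hrec x
      refine ⟨p, hQF p hp ?_, hxp⟩
      refine mem_unstable_of_closed f hxp isClosed_closure fun n => ?_
      obtain ⟨y, hy, rfl⟩ := hx n
      rwa [symm_iterate_apply]
    · rintro ⟨p, hp, hxp⟩ m
      refine ⟨(⇑f.symm)^[m] x, ?_, iterate_symm_apply f m x⟩
      have hch : ∀ m : ℕ, PCh f p ((⇑f.symm)^[m] x) := by
        intro m
        induction m with
        | zero => exact PCh.of_unstable f (hper p (hPF hp)) hxp
        | succ m ih =>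
          rw [Function.iterate_succ_apply']
          exact PCh.backward f (hpp p hp) ih
      exact subset_closure ⟨p, hp, hch m _ hε2⟩

/-- Connectedness of the attractor from connectedness of its basin. -/
theorem attractor_isConnected {n : ℕ} (hM : IsChartedEuclidean n M) (f : M ≃ₜ M) {Q A R : Set M}
    (hQ : IsCompact Q) (hfQ : f '' Q ⊆ interior Q) (hA : (⋂ m : ℕ, (⇑f)^[m] '' Q) = A)
    (hAne : A.Nonempty) (hR : IsClosed R) (hRc : IsConnected Rᶜ) (hAR : A ⊆ Rᶜ)
    (hRQ : ∀ x, x ∉ R → ∃ m : ℕ, (⇑f)^[m] x ∈ interior Q) : IsConnected A := by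
  have hit : ∀ m, Continuous ((⇑f)^[m]) := fun m => f.continuous.iterate m
  have hAc : IsCompact A := by
    rw [← hA]
    exact (isClosed_iInter fun m => (hQ.image (hit m)).isClosed).isCompact
  obtain ⟨L, hLc, hLconn, hLR, hAL⟩ := exists_compact_connected hM hR.isOpen_compl hRc hAc hAR
  have hintf : ∀ x ∈ Q, f x ∈ interior Q := fun x hx => hfQ ⟨x, hx, rfl⟩
  obtain ⟨m0, hm0⟩ := hLc.elim_directed_cover (fun m : ℕ => (⇑f)^[m] ⁻¹' interior Q)
    (fun m => isOpen_interior.preimage (hit m)) (fun x hx => Set.mem_iUnion.2 (hRQ x (hLR hx)))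
    (directed_of_isDirected_le (monotone_nat_of_le_succ fun m x hx => by
      show (⇑f)^[m + 1] x ∈ interior Q
      rw [Function.iterate_succ_apply']
      exact hintf _ (interior_subset hx)))
  have hmaps : ∀ m, A ⊆ (⇑f)^[m] '' A := by
    intro m x hx
    refine ⟨(⇑f.symm)^[m] x, ?_, iterate_symm_apply f m x⟩
    rw [← hA] at hx ⊢
    rw [Set.mem_iInter] at hx ⊢
    intro t
    obtain ⟨y, hy, hyx⟩ := hx (m + t)
    refine ⟨y, hy, ?_⟩
    rw [← hyx, Function.iterate_add_apply, symm_iterate_apply]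
  refine ⟨hAne, ?_⟩
  rw [isPreconnected_iff_subset_of_disjoint_closed]
  intro u v hu hv huv hdisj
  obtain ⟨U1, U2, hU1, hU2, hAU1, hAU2, hd⟩ : SeparatedNhds (A ∩ u) (A ∩ v) := by
    refine SeparatedNhds.of_isCompact_isCompact (hAc.inter_right hu) (hAc.inter_right hv) ?_
    rw [Set.disjoint_left]
    rintro x ⟨h1, h2⟩ ⟨-, h3⟩
    have : x ∈ A ∩ (u ∩ v) := ⟨h1, h2, h3⟩
    rw [hdisj] at this
    exact this
  have hAU : A ⊆ U1 ∪ U2 := by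
    intro x hx
    rcases huv hx with h | h
    · exact Or.inl (hAU1 ⟨hx, h⟩)
    · exact Or.inr (hAU2 ⟨hx, h⟩)
  have hanti : Antitone fun m : ℕ => (⇑f)^[m] '' Q := antitone_nat_of_succ_le fun m => by
    rintro _ ⟨y, hy, rfl⟩
    refine ⟨f y, interior_subset (hintf y hy), ?_⟩
    rw [Function.iterate_succ_apply]
  obtain ⟨m1, hm1⟩ := exists_subset_nhds_of_isCompact (V := fun m : ℕ => (⇑f)^[m] '' Q)
    hanti.directed_ge (fun m => hQ.image (hit m)) (U := U1 ∪ U2)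
    (fun x hx => (hU1.union hU2).mem_nhds (hAU (hA ▸ hx)))
  have hfin : (⇑f)^[m1 + m0] '' L ⊆ U1 ∪ U2 := by
    rintro _ ⟨y, hy, rfl⟩
    rw [Function.iterate_add_apply]
    exact hm1 ⟨_, interior_subset (hm0 hy), rfl⟩
  have hAf : A ⊆ (⇑f)^[m1 + m0] '' L := (hmaps _).trans (Set.image_mono hAL)
  rcases IsPreconnected.subset_or_subset hU1 hU2 hd hfin
    (hLconn.isPreconnected.image _ (hit _).continuousOn) with h | h
  · left
    intro x hx
    rcases huv hx with h' | h'
    · exact h'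
    · exact absurd (hAU2 ⟨hx, h'⟩) (Set.disjoint_left.1 hd (h (hAf hx)))
  · right
    intro x hx
    rcases huv hx with h' | h'
    · exact absurd (h (hAf hx)) (Set.disjoint_left.1 hd (hAU1 ⟨hx, h'⟩))
    · exact h'

end Main

/-- in the setting of Statement 8, `R_j = ⋃_{l > j} W^s_{O_l}` is a
repeller of `f` (an attractor of `f⁻¹`), and if every periodic point of the orbits
`O_{j+1}, …, O_k` has Morse index at least `2`, then `A_j = ⋃_{l ≤ j} W^u_{O_l}` is
connected. (Orbits are indexed by `Fin k`; `A_j` corresponds to indices `(l : ℕ) < j`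
and `R_j` to indices `(l : ℕ) ≥ j`.) -/
theorem repeller_and_connected_attractor {n : ℕ} (hn : 2 ≤ n) {M : Type*}
    [MetricSpace M] [CompactSpace M] [ConnectedSpace M] [Nonempty M]
    (hM : IsChartedEuclidean n M)
    (f : M ≃ₜ M) (hf : RegularHomeo n f)
    (k : ℕ) (O : Fin k → Set M)
    (horb : ∀ l : Fin k, ∃ p : M,
      (∃ m : ℕ, 0 < m ∧ Function.IsPeriodicPt (⇑f) m p) ∧ O l = orbitOf f p)
    (hcover : ∀ p : M, (∃ m : ℕ, 0 < m ∧ Function.IsPeriodicPt (⇑f) m p) →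
      ∃ l : Fin k, p ∈ O l)
    (hinj : Function.Injective O)
    (horder : ∀ l j : Fin k, l ≠ j →
      ((⋃ p ∈ O j, unstableSet f p) ∩ ⋃ p ∈ O l, stableSet f p).Nonempty →
        (l : ℕ) < (j : ℕ))
    (j : ℕ) (hj1 : 1 ≤ j) (hjk : j ≤ k - 1) :
    (∃ Q : Set M, IsCompact Q ∧
      (⋃ (l : Fin k) (_ : j ≤ (l : ℕ)), ⋃ p ∈ O l, stableSet f p) ⊆ interior Q ∧
      f.symm '' Q ⊆ interior Q ∧
      (⋂ m : ℕ, (⇑f.symm)^[m] '' Q) =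
        ⋃ (l : Fin k) (_ : j ≤ (l : ℕ)), ⋃ p ∈ O l, stableSet f p) ∧
    ((∀ p : M, (∃ l : Fin k, j ≤ (l : ℕ) ∧ p ∈ O l) →
        ∀ i : ℕ, TopHyperbolic n f p i → 2 ≤ i) →
      IsConnected (⋃ (l : Fin k) (_ : (l : ℕ) < j), ⋃ p ∈ O l, unstableSet f p)) := by
  classical
  obtain ⟨hF, hhyp⟩ := hf
  set F : Set M := chainRecurrentSet (⇑f) with hFdef
  have hper : ∀ p ∈ F, p ∈ Function.periodicPts (⇑f) := by
    intro p hp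
    obtain ⟨i, -, m, hm, hpm, -⟩ := hhyp p hp
    exact ⟨m, hm, hpm⟩
  have hrec : ∀ y, PCh f y y → y ∈ F := fun y hy ε hε => (hy ε hε).isEpsChain
  have hperF : ∀ p ∈ Function.periodicPts (⇑f), p ∈ F := fun p hp =>
    hrec p (PCh.of_periodic hp 0)
  have hO : ∀ l, ∀ p ∈ O l, p ∈ Function.periodicPts (⇑f) ∧ O l = orbitOf f p := by
    intro l p hp
    obtain ⟨p0, ⟨m, hm, hpm⟩, hl⟩ := horb l
    have hp' : p ∈ orbitOf f p0 := hl ▸ hp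
    refine ⟨?_, by rw [hl]; exact orbitOf_eq f ⟨m, hm, hpm⟩ hp'⟩
    obtain ⟨t, rfl⟩ := hp'
    exact ⟨m, hm, hpm.apply_iterate t⟩
  have hOF : ∀ l, O l ⊆ F := fun l p hp => hperF p (hO l p hp).1
  have hcov : ∀ p ∈ F, ∃ l, p ∈ O l := fun p hp => hcover p (hper p hp)
  have huniq : ∀ l l' p, p ∈ O l → p ∈ O l' → l = l' := fun l l' p h h' =>
    hinj (by rw [(hO l p h).2, (hO l' p h').2])
  have hOf : ∀ l p t, p ∈ O l → (⇑f)^[t] p ∈ O l := fun l p t hp => by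
    rw [(hO l p hp).2]; exact ⟨t, rfl⟩
  set P : Set M := {p | ∃ l : Fin k, (l : ℕ) < j ∧ p ∈ O l} with hP
  have hPF : P ⊆ F := fun p ⟨l, _, hp⟩ => hOF l hp
  -- the order is compatible with chains
  have hsep : ∀ p ∈ P, ∀ q ∈ F, PCh f p q → q ∈ P := by
    by_contra hcon
    push Not at hcon
    obtain ⟨p0, hp0, q0, hq0, hc0, hq0P⟩ := hcon
    obtain ⟨b0, hb0⟩ := hcov q0 hq0
    have hjb0 : j ≤ (b0 : ℕ) := by
      by_contra hlt
      exact hq0P ⟨b0, by omega, hb0⟩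
    obtain ⟨b, ⟨hjb, p, hpP, q, hqb, hpq⟩, hmax⟩ := Set.exists_max_image
      {b : Fin k | j ≤ (b : ℕ) ∧ ∃ p ∈ P, ∃ q ∈ O b, PCh f p q} id (Set.toFinite _)
      ⟨b0, hjb0, p0, hp0, q0, hb0, hc0⟩
    obtain ⟨V, W, hV, hW, hbV, hFW, hVW⟩ : SeparatedNhds (O b) (F \ O b) :=
      SeparatedNhds.of_isCompact_isCompact (hF.subset (hOF b)).isCompact
        (hF.subset Set.sdiff_subset).isCompact Set.disjoint_sdiff_right
    have hVF : ∀ y ∈ F, y ∈ closure V → y ∈ O b := by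
      intro y hy hyV
      by_contra hyb
      exact Set.disjoint_left.1 (hVW.closure_left hW) hyV (hFW ⟨hy, hyb⟩)
    have hpV : p ∉ V := by
      intro hpV
      have hpb := hVF p (hPF hpP) (subset_closure hpV)
      obtain ⟨l, hl, hpl⟩ := hpP
      have := huniq l b p hpl hpb
      omega
    have hpp : PCh f p p := PCh.of_periodic (hper p (hPF hpP)) 0
    obtain ⟨z, hzV, hpz, hzcl⟩ := exit_point f.continuous hV hpp
      (fun t => hbV (hOf b q t hqb)) hpV hpq
    obtain ⟨q1, hq1F, hzq1⟩ := exists_stable f hF hper hrec z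
    have hq1b : q1 ∈ O b := by
      refine hVF q1 hq1F (isClosed_closure.mem_of_tendsto hzq1 ?_)
      filter_upwards [eventually_gt_atTop 0] with t ht
      have hmp := Function.minimalPeriod_pos_of_mem_periodicPts (hper q1 hq1F)
      have hpos : 0 < t * Function.minimalPeriod (⇑f) q1 := Nat.mul_pos ht hmp
      obtain ⟨s, hs⟩ := Nat.exists_eq_add_of_lt hpos
      rw [zero_add] at hs
      rw [hs]
      exact hzcl s
    obtain ⟨q2, hq2F, hzq2⟩ := exists_unstable f hF hper hrec z
    have hpq2 : PCh f p q2 := by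
      refine mem_unstable_of_closed f hzq2 (PCh.isClosed f p) fun m => ?_
      induction m with
      | zero => exact hpz
      | succ m ih =>
        rw [Function.iterate_succ_apply']
        exact PCh.backward f hpp ih
    obtain ⟨c, hq2c⟩ := hcov q2 hq2F
    by_cases hbc : b = c
    · subst hbc
      have h1 : PCh f z q1 := PCh.of_stable f (hper q1 hq1F) hzq1
      have h2 : PCh f q1 q2 := by
        have : q2 ∈ orbitOf f q1 := (hO b q1 hq1b).2 ▸ hq2c
        obtain ⟨t, rfl⟩ := this
        exact PCh.of_periodic (hper q1 hq1F) t
      have h3 : PCh f q2 z := PCh.of_unstable f (hper q2 hq2F) hzq2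
      obtain ⟨d, hzd⟩ := hcov z (hrec z ((h1.trans h2).trans h3))
      have hfz : (⇑f)^[0 + 1] z ∈ O d := hOf d z _ hzd
      have hdb := huniq d b _ hfz (hVF _ (hOF d hfz) (hzcl 0))
      exact hzV (hbV (hdb ▸ hzd))
    · have hlt := horder b c hbc ⟨z, Set.mem_biUnion hq2c hzq2, Set.mem_biUnion hq1b hzq1⟩
      have := hmax c ⟨by omega, p, hpP, q2, hq2c, hpq2⟩
      have h' : (c : ℕ) ≤ (b : ℕ) := this
      omega
  obtain ⟨Q, hQ, hPQ, hfQ, hQF, hQA⟩ := exists_trapping f hF hper hrec hPF hsep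
  have hAeq : (⋃ (l : Fin k) (_ : (l : ℕ) < j), ⋃ p ∈ O l, unstableSet f p) =
      ⋃ p ∈ P, unstableSet f p := by
    ext x
    simp only [Set.mem_iUnion, exists_prop, hP, Set.mem_ofPred_eq]
    constructor
    · rintro ⟨l, hl, p, hp, hx⟩
      exact ⟨p, ⟨l, hl, hp⟩, hx⟩
    · rintro ⟨p, ⟨l, hl, hp⟩, hx⟩
      exact ⟨l, hl, p, hp, hx⟩
  rw [hAeq]
  set R : Set M := ⋃ (l : Fin k) (_ : j ≤ (l : ℕ)), ⋃ p ∈ O l, stableSet f p with hRdef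
  have hRmem : ∀ x, x ∈ R ↔ ∃ l : Fin k, j ≤ (l : ℕ) ∧ ∃ p ∈ O l, x ∈ stableSet f p := by
    intro x
    simp only [hRdef, Set.mem_iUnion, exists_prop]
  have hintf : ∀ x ∈ Q, f x ∈ interior Q := fun x hx => hfQ ⟨x, hx, rfl⟩
  have hnotQ : ∀ l : Fin k, j ≤ (l : ℕ) → ∀ p ∈ O l, p ∉ Q := by
    intro l hl p hp hpQ
    obtain ⟨l', hl', hp'⟩ := hQF p (hOF l hp) hpQ
    have := huniq l l' p hp hp'
    omega
  have hstayQ : ∀ x ∈ Q, ∀ t : ℕ, (⇑f)^[t] x ∈ Q := by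
    intro x hx t
    induction t with
    | zero => exact hx
    | succ t ih => rw [Function.iterate_succ_apply']; exact interior_subset (hintf _ ih)
  have hRQ : ∀ x, x ∈ R ↔ ∀ t : ℕ, (⇑f)^[t] x ∉ interior Q := by
    intro x
    rw [hRmem]
    constructor
    · rintro ⟨l, hl, p, hp, hx⟩ t ht
      refine hnotQ l hl p hp (hQ.isClosed.mem_of_tendsto hx ?_)
      filter_upwards [eventually_ge_atTop t] with s hs
      have hmp := Function.minimalPeriod_pos_of_mem_periodicPts (hO l p hp).1
      have hle : t ≤ s * Function.minimalPeriod (⇑f) p :=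
        hs.trans (Nat.le_mul_of_pos_right s hmp)
      obtain ⟨r, hr⟩ := Nat.exists_eq_add_of_le hle
      rw [hr, add_comm, Function.iterate_add_apply]
      exact hstayQ _ (interior_subset ht) r
    · intro hx
      obtain ⟨p, hpF, hxp⟩ := exists_stable f hF hper hrec x
      obtain ⟨l, hl⟩ := hcov p hpF
      refine ⟨l, ?_, p, hl, hxp⟩
      by_contra hlt
      have h1 : p ∈ (interior Q)ᶜ :=
        mem_stable_of_closed f hxp isOpen_interior.isClosed_compl hx
      exact h1 (hPQ ⟨l, by omega, hl⟩)
  have hRclosed : IsClosed R := by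
    have : R = ⋂ t : ℕ, (⇑f)^[t] ⁻¹' (interior Q)ᶜ := by
      ext x
      rw [hRQ]
      simp
    rw [this]
    exact isClosed_iInter fun t =>
      isOpen_interior.isClosed_compl.preimage (f.continuous.iterate t)
  have hsymQ : ∀ x, x ∉ interior Q → f.symm x ∈ interior (interior Q)ᶜ := by
    intro x hx
    have h1 : f.symm x ∈ Qᶜ := by
      intro h
      have := hintf _ h
      rw [f.apply_symm_apply] at this
      exact hx this
    exact interior_maximal (Set.compl_subset_compl.2 interior_subset) hQ.isClosed.isOpen_compl h1
  refine ⟨⟨(interior Q)ᶜ, isOpen_interior.isClosed_compl.isCompact, ?_, ?_, ?_⟩, ?_⟩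
  · intro x hx
    have h1 : f x ∉ interior Q := (hRQ x).1 hx 1
    have := hsymQ _ h1
    rwa [f.symm_apply_apply] at this
  · rintro _ ⟨x, hx, rfl⟩
    exact hsymQ x hx
  · ext x
    rw [hRQ, Set.mem_iInter]
    refine forall_congr' fun t => ?_
    constructor
    · rintro ⟨y, hy, rfl⟩
      rw [iterate_symm_apply]
      exact hy
    · intro h
      exact ⟨_, h, symm_iterate_apply f t x⟩
  · intro hidx
    have hidx' : ∀ p : {p : M // ∃ l : Fin k, j ≤ (l : ℕ) ∧ p ∈ O l},
        ∃ S : Submodule ℝ (EuclideanSpace ℝ (Fin n)),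
          1 < Module.rank ℝ (EuclideanSpace ℝ (Fin n) ⧸ S) ∧
        ∃ φ : ℕ → EuclideanSpace ℝ (Fin n) → M, (∀ s, IsOpenEmbedding (φ s)) ∧
          stableSet f p = ⋃ s, φ s '' (S : Set (EuclideanSpace ℝ (Fin n))) := by
      rintro ⟨p, hp⟩
      obtain ⟨l, hl, hpl⟩ := id hp
      obtain ⟨i, hin, hi⟩ := hhyp p (hOF l hpl)
      exact ⟨stableSub n i, stableSub_codim (hidx p hp i hi) hin, stable_decomp f hi⟩
    choose S hS φ hφ hst using hidx'
    have hfin : Finite {p : M // ∃ l : Fin k, j ≤ (l : ℕ) ∧ p ∈ O l} :=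
      (hF.subset fun p ⟨l, _, hp⟩ => hOF l hp : {p : M | ∃ l : Fin k, j ≤ (l : ℕ) ∧ p ∈ O l}.Finite)
    have hRc : IsConnected Rᶜ := by
      refine compl_isConnected_of_codim
        (ι := {p : M // ∃ l : Fin k, j ≤ (l : ℕ) ∧ p ∈ O l} × ℕ)
        (fun α => φ α.1 α.2) (fun α => hφ α.1 α.2) (fun α => S α.1) (fun α => hS α.1)
        hRclosed ?_
      ext x
      rw [hRmem, Set.mem_iUnion]
      constructor
      · rintro ⟨l, hl, p, hp, hx⟩
        have hx' : x ∈ stableSet f (⟨p, l, hl, hp⟩ :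
          {p : M // ∃ l : Fin k, j ≤ (l : ℕ) ∧ p ∈ O l}).1 := hx
        rw [hst] at hx'
        obtain ⟨s, hs⟩ := Set.mem_iUnion.1 hx'
        exact ⟨(_, s), hs⟩
      · rintro ⟨⟨⟨p, l, hl, hp⟩, s⟩, hx⟩
        refine ⟨l, hl, p, hp, ?_⟩
        have : x ∈ stableSet f (⟨p, l, hl, hp⟩ :
          {p : M // ∃ l : Fin k, j ≤ (l : ℕ) ∧ p ∈ O l}).1 := by
          rw [hst]
          exact Set.mem_iUnion.2 ⟨s, hx⟩
        exact this
    refine attractor_isConnected hM f hQ hfQ hQA ?_ hRclosed hRc ?_ ?_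
    · obtain ⟨p, -, hp⟩ := horb ⟨0, by omega⟩
      have hpO : p ∈ O ⟨0, by omega⟩ := by rw [hp]; exact ⟨0, rfl⟩
      have hpm := (hO _ p hpO).1
      refine ⟨p, Set.mem_biUnion (show p ∈ P from ⟨_, (by show 0 < j; omega), hpO⟩) ?_⟩
      have hfix : ∀ t : ℕ, (⇑f.symm)^[t * Function.minimalPeriod (⇑f) p] p = p := by
        intro t
        have h1 : Function.IsPeriodicPt (⇑f.symm) (Function.minimalPeriod (⇑f.symm) p) p :=
          Function.isPeriodicPt_minimalPeriod _ _
        rw [minimalPeriod_symm] at h1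
        exact (h1.const_mul t).eq
      simp only [unstableSet, Set.mem_ofPred_eq, hfix]
      exact tendsto_const_nhds
    · intro x hx hxR
      rw [← hQA, Set.mem_iInter] at hx
      obtain ⟨y, hy, hyx⟩ := hx 1
      apply (hRQ x).1 hxR 0
      rw [← hyx]
      exact hintf y hy
    · intro x hx
      rw [hRQ] at hx
      push Not at hx
      exact hx
end

section
/- Let n ≥ 2, let M be a closed connected topological n-manifold, and let f : M → M be a regular homeomorphism whose chain recurrent set consists of exactly two points: a fixed point α of Morse index n (a source) and a fixed point ω of Morse index 0 (a sink). Then M is homeomorphic to the n-sphere Sⁿ. -/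
open Filter Topology

lemma modelMap_surj (n i : ℕ) (δu δs : ℝ) (hu : δu = 1 ∨ δu = -1) (hs : δs = 1 ∨ δs = -1) :
    Function.Surjective (modelMap n i δu δs) := by
  intro z
  have hu0 : δu ≠ 0 := by rcases hu with h | h <;> rw [h] <;> norm_num
  have hs0 : δs ≠ 0 := by rcases hs with h | h <;> rw [h] <;> norm_num
  refine ⟨WithLp.toLp 2 fun j : Fin n =>
    if (j : ℕ) < i then (if (j : ℕ) = 0 then 2 * δu else 2)⁻¹ * z j
    else (if (j : ℕ) = i then δs / 2 else 1 / 2)⁻¹ * z j, ?_⟩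
  ext j
  simp only [modelMap]
  split_ifs <;> field_simp

lemma modelMap_norm_sink (n : ℕ) (δu δs : ℝ) (hs : δs = 1 ∨ δs = -1)
    (x : EuclideanSpace ℝ (Fin n)) : ‖modelMap n 0 δu δs x‖ = ‖x‖ / 2 := by
  have hs2 : δs ^ 2 = 1 := by rcases hs with h | h <;> rw [h] <;> norm_num
  have h : ‖modelMap n 0 δu δs x‖ ^ 2 = (‖x‖ / 2) ^ 2 := by
    rw [div_pow, EuclideanSpace.real_norm_sq_eq, EuclideanSpace.real_norm_sq_eq, Finset.sum_div]
    refine Finset.sum_congr rfl fun j _ => ?_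
    simp only [modelMap, Nat.not_lt_zero, if_false]
    split_ifs
    · rw [mul_pow, div_pow, hs2]; ring
    · ring
  exact (pow_left_inj₀ (norm_nonneg _) (by positivity) two_ne_zero).1 h

lemma modelMap_norm_source (n : ℕ) (δu δs : ℝ) (hs : δu = 1 ∨ δu = -1)
    (x : EuclideanSpace ℝ (Fin n)) : ‖modelMap n n δu δs x‖ = 2 * ‖x‖ := by
  have hs2 : δu ^ 2 = 1 := by rcases hs with h | h <;> rw [h] <;> norm_num
  have h : ‖modelMap n n δu δs x‖ ^ 2 = (2 * ‖x‖) ^ 2 := by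
    rw [mul_pow, EuclideanSpace.real_norm_sq_eq, EuclideanSpace.real_norm_sq_eq, Finset.mul_sum]
    refine Finset.sum_congr rfl fun j _ => ?_
    simp only [modelMap, j.2, if_true]
    split_ifs
    · rw [mul_pow, mul_pow, hs2]; ring
    · ring
  exact (pow_left_inj₀ (norm_nonneg _) (by positivity) two_ne_zero).1 h

/-- At a fixed point, the chart domain is fully invariant. -/
lemma TopHyperbolic.chart {M : Type*} [MetricSpace M] {n : ℕ} {f : M ≃ₜ M} {p : M} {i : ℕ}
    (hp : f p = p) (h : TopHyperbolic n f p i) :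
    ∃ δu δs : ℝ, (δu = 1 ∨ δu = -1) ∧ (δs = 1 ∨ δs = -1) ∧
      ∃ (U : Set M) (_ : IsOpen U) (_ : p ∈ U) (h : U ≃ₜ EuclideanSpace ℝ (Fin n)),
        (∀ x : U, f x = ((h.symm (modelMap n i δu δs (h x)) : U) : M)) ∧
        (∀ k x, (⇑f)^[k] x ∈ U ↔ x ∈ U) := by
  obtain ⟨m, hm, -, hmin, δu, δs, hu, hs, U, hU, hpU, h, hh⟩ := h
  have h1 : Function.minimalPeriod (⇑f) p = 1 := Function.minimalPeriod_eq_one_iff_isFixedPt.2 hp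
  obtain rfl : m = 1 := by omega
  simp only [Function.iterate_one] at hh
  refine ⟨δu, δs, hu, hs, U, hU, hpU, h, hh, ?_⟩
  have key : ∀ x, f x ∈ U ↔ x ∈ U := by
    intro x
    constructor
    · intro hx
      obtain ⟨w, hw⟩ := modelMap_surj n i δu δs hu hs (h ⟨f x, hx⟩)
      have := hh (h.symm w)
      rw [h.apply_symm_apply, hw, h.symm_apply_apply] at this
      rw [← f.injective this]
      exact (h.symm w).2
    · intro hx
      rw [hh ⟨x, hx⟩]
      exact Subtype.prop _
  intro k
  induction k with
  | zero => simp
  | succ k ih => intro x; rw [Function.iterate_succ_apply, ih, key]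

lemma chainRecurrent_of_mapClusterPt {M : Type*} [MetricSpace M] {f : M → M} (hf : Continuous f)
    {x y : M} (hy : MapClusterPt y atTop (fun k : ℕ => f^[k] x)) : ChainRecurrent f y := by
  intro ε hε
  have h1 := hy.frequently ((hf.tendsto y).eventually (Metric.ball_mem_nhds _ hε))
  have h2 := hy.frequently (Metric.ball_mem_nhds y hε)
  obtain ⟨k, hk⟩ := h1.exists
  obtain ⟨l, hkl, hl⟩ := frequently_atTop.1 h2 (k + 2)
  refine ⟨2, by norm_num, ![y, f^[k+1] x, y], ![1, l - (k + 1)], rfl, rfl, ?_, ?_⟩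
  · intro i; fin_cases i
    · simp
    · simp; omega
  · intro i; fin_cases i
    · simpa [Function.iterate_succ_apply', dist_comm] using hk
    · have : f^[l - (k+1)] (f^[k+1] x) = f^[l] x := by
        rw [← Function.iterate_add_apply]; congr 2; omega
      have h3 : dist (f^[l - (k+1)] (f^[k+1] x)) y < ε := by rw [this]; exact hl
      exact h3

/-- a closed connected topological `n`-manifold (`n ≥ 2`) admitting a
regular homeomorphism whose chain recurrent set consists of exactly one source fixed
point `α` (Morse index `n`) and one sink fixed point `ω` (Morse index `0`) is
homeomorphic to the `n`-sphere `Sⁿ`. -/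
theorem north_south_dynamics_sphere {n : ℕ} (hn : 2 ≤ n) {M : Type*}
    [MetricSpace M] [CompactSpace M] [ConnectedSpace M] [Nonempty M]
    (hM : IsChartedEuclidean n M)
    (f : M ≃ₜ M) (hf : RegularHomeo n f)
    (α ω : M) (hαω : α ≠ ω)
    (hR : chainRecurrentSet (⇑f) = {α, ω})
    (hαfix : f α = α) (hωfix : f ω = ω)
    (hα : TopHyperbolic n f α n) (hω : TopHyperbolic n f ω 0) :
    Nonempty (M ≃ₜ (Metric.sphere (0 : EuclideanSpace ℝ (Fin (n + 1))) 1)) := by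
  obtain ⟨δu, δs, hu, hs, U, hU, hpU, h, hh, hinv⟩ := hω.chart hωfix
  obtain ⟨δu', δs', hu', hs', V, hV, hpV, g, hg, ginv⟩ := hα.chart hαfix
  have hzero : ∀ p (hp : p ∈ U), f p = p → h ⟨p, hp⟩ = 0 := by
    intro p hp hfp
    have h1 := hh ⟨p, hp⟩
    have h2 : (⟨p, hp⟩ : U) = h.symm (modelMap n 0 δu δs (h ⟨p, hp⟩)) := by
      apply Subtype.ext; rw [← h1]; exact hfp.symm
    have h3 := congrArg (fun z => ‖h z‖) h2
    simp only [h.apply_symm_apply, modelMap_norm_sink n δu δs hs] at h3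
    exact norm_eq_zero.1 (by linarith)
  have hαU : α ∉ U := by
    intro hαU
    have := h.injective ((hzero α hαU hαfix).trans (hzero ω hpU hωfix).symm)
    exact hαω (congrArg Subtype.val this)
  have gα : g ⟨α, hpV⟩ = 0 := by
    have h1 := hg ⟨α, hpV⟩
    have h2 : (⟨α, hpV⟩ : V) = g.symm (modelMap n n δu' δs' (g ⟨α, hpV⟩)) := by
      apply Subtype.ext; rw [← h1]; exact hαfix.symm
    have h3 := congrArg (fun z => ‖g z‖) h2
    simp only [g.apply_symm_apply, modelMap_norm_source n δu' δs' hu'] at h3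
    exact norm_eq_zero.1 (by linarith)
  have hgrow : ∀ x (hx : x ∈ V) (k : ℕ),
      ‖g ⟨(⇑f)^[k] x, (ginv k x).2 hx⟩‖ = 2 ^ k * ‖g ⟨x, hx⟩‖ := by
    intro x hx k
    induction k with
    | zero => simp
    | succ k ih =>
      have h2 : (⟨(⇑f)^[k+1] x, (ginv (k+1) x).2 hx⟩ : V) =
          g.symm (modelMap n n δu' δs' (g ⟨(⇑f)^[k] x, (ginv k x).2 hx⟩)) := by
        apply Subtype.ext; rw [← hg]; exact Function.iterate_succ_apply' _ _ _
      rw [h2, g.apply_symm_apply, modelMap_norm_source n δu' δs' hu', ih]; ring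
  have hUc : ∀ x, x ≠ α → x ∈ U := by
    intro x hx
    obtain ⟨y, hy⟩ : ∃ y, MapClusterPt y atTop (fun k : ℕ => (⇑f)^[k] x) :=
      exists_clusterPt_of_compactSpace _
    have hyR : y ∈ chainRecurrentSet (⇑f) := chainRecurrent_of_mapClusterPt f.continuous hy
    rw [hR] at hyR
    rcases hyR with rfl | hyR
    · exfalso
      obtain ⟨k, hk⟩ := (hy.frequently (hV.mem_nhds hpV)).exists
      have hxV := (ginv k x).1 hk
      have hpos : 0 < ‖g ⟨x, hxV⟩‖ := by
        rw [norm_pos_iff, ← gα]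
        intro h; exact hx (congrArg Subtype.val (g.injective h))
      have hW : Subtype.val '' (g ⁻¹' Metric.ball 0 1) ∈ 𝓝 y := by
        apply (hV.isOpenMap_subtype_val _ (Metric.isOpen_ball.preimage g.continuous)).mem_nhds
        exact ⟨⟨y, hpV⟩, by simp [gα], rfl⟩
      have ht : Tendsto (fun k : ℕ => (2:ℝ) ^ k * ‖g ⟨x, hxV⟩‖) atTop atTop :=
        (tendsto_pow_atTop_atTop_of_one_lt one_lt_two).atTop_mul_const hpos
      obtain ⟨l, ⟨z, hz, hzl⟩, hl⟩ := ((hy.frequently hW).and_eventually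
        (ht.eventually_ge_atTop 1)).exists
      have hze : z = ⟨(⇑f)^[l] x, (ginv l x).2 hxV⟩ := Subtype.ext hzl
      rw [← hgrow, ← hze] at hl
      have : ‖g z‖ < 1 := by simpa using hz
      linarith
    · rw [Set.mem_singleton_iff] at hyR
      subst hyR
      obtain ⟨k, hk⟩ := (hy.frequently (hU.mem_nhds hpU)).exists
      exact (hinv k x).1 hk
  have emb : IsEmbedding (fun z : EuclideanSpace ℝ (Fin n) => ((h.symm z : U) : M)) :=
    IsEmbedding.subtypeVal.comp h.symm.isEmbedding
  have hrange : Set.range (fun z : EuclideanSpace ℝ (Fin n) => ((h.symm z : U) : M)) = {α}ᶜ := by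
    ext x
    simp only [Set.mem_range, Set.mem_compl_iff, Set.mem_singleton_iff]
    constructor
    · rintro ⟨z, rfl⟩ h'
      exact hαU (h' ▸ Subtype.prop _)
    · intro hx
      exact ⟨h ⟨x, hUc x hx⟩, by simp⟩
  let e1 := OnePoint.equivOfIsEmbeddingOfRangeEq _ _ emb hrange
  let e2 := onePointEquivSphereOfFinrankEq (ι := Fin (n+1)) (V := EuclideanSpace ℝ (Fin n))
    (by simp)
  exact ⟨e1.symm.trans e2⟩
end
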